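/- Let λ be a partition and λ' its conjugate partition. Then for every natural number j with 2j ≤ |λ|, the coefficients of the Wronskian Hermite polynomials satisfy coeff_{|λ|−2j}(He_λ) = (−1)^j · coeff_{|λ|−2j}(He_{λ'}). (Equivalently, the remainder polynomials satisfy R_λ(x) = (−1)^{d} R_{λ'}(−x), where d is the common degree of the remainder polynomials; in particular if λ is self-conjugate then R_λ is an even polynomial.) -/

import Mathlib

/-- A partition: a weakly decreasing list of positive integers. -/
def IsPartition (l : List ℕ) : Prop :=
  l.Pairwise (· ≥ ·) ∧ ∀ x ∈ l, 0 < x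

/-- The degree vector of a partition: `n_i = λ_i + ℓ(λ) − i` (here `i` is 0-indexed). -/
def degVec (l : List ℕ) (i : Fin l.length) : ℕ :=
  l.get i + (l.length - 1 - (i : ℕ))

/-- The Vandermonde determinant `Δ(n_λ) = ∏_{i<j} (n_j − n_i)` of the degree vector. -/
noncomputable def vanderQ (l : List ℕ) : ℚ :=
  ∏ i : Fin l.length, ∏ j : Fin l.length,
    if (i : ℕ) < (j : ℕ) then ((degVec l j : ℚ) - (degVec l i : ℚ)) else 1

/-- The Wronskian Hermite polynomial `He_λ = Wr[He_{n_1},…,He_{n_ℓ}] / Δ(n_λ)`. -/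
noncomputable def HeW (l : List ℕ) : Polynomial ℚ :=
  Polynomial.C (vanderQ l)⁻¹ *
    (Matrix.of fun i j : Fin l.length =>
      (⇑Polynomial.derivative)^[(i : ℕ)]
        ((Polynomial.hermite (degVec l j)).map (Int.castRingHom ℚ))).det

/-- The conjugate partition entry `λ'_j = #{i : λ_i ≥ j}`. -/
def conjPart (l : List ℕ) (j : ℕ) : ℕ :=
  (l.filter fun a => decide (j ≤ a)).length

/-- The conjugate partition, as a list `(λ'_1, λ'_2, …, λ'_{λ_1})`. -/
def conjugate (l : List ℕ) : List ℕ :=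
  (List.range l.headI).map fun j => conjPart l (j + 1)


open Polynomial in
/-- The family `G a` with `G a (n+2) = X G a (n+1) + a (n+1) G a n`. -/
noncomputable def GG (a : ℂ) : ℕ → Polynomial ℂ
  | 0 => 1
  | 1 => X
  | (n + 2) => X * GG a (n + 1) + C (a * (n + 1)) * GG a n

open Polynomial in
lemma GG_deriv (a : ℂ) (n : ℕ) :
    derivative (GG a (n + 1)) = C ((n : ℂ) + 1) * GG a n := by
  induction n using Nat.twoStepInduction with
  | zero => simp [GG]
  | one => simp [GG]; ring
  | more n ih1 ih2 =>
    rw [GG, derivative_add, derivative_mul, derivative_C_mul, ih1, ih2]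
    simp only [GG, derivative_X]
    push_cast
    simp only [map_add, map_mul, map_natCast, map_one, map_ofNat]
    ring_nf
    try rw [show (C 2 : Polynomial ℂ) = 2 from rfl]
    try ring

open Polynomial in
lemma GG_zero (n : ℕ) : GG 0 n = X ^ n := by
  induction n using Nat.twoStepInduction with
  | zero => simp [GG]
  | one => simp [GG]
  | more n ih1 ih2 => rw [GG, ih2]; simp; ring

open Polynomial in
lemma GG_hermite (n : ℕ) : GG (-1) n = (hermite n).map (Int.castRingHom ℂ) := by
  induction n with
  | zero => simp [GG]
  | succ n ih =>
    rw [hermite_succ, Polynomial.map_sub, Polynomial.map_mul, ← derivative_map, ← ih, map_X]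
    cases n with
    | zero => simp [GG]
    | succ n => rw [GG_deriv, GG]; simp; ring

open Polynomial in
/-- Normalized family. -/
noncomputable def hh (a : ℂ) (n : ℕ) : Polynomial ℂ := C ((n.factorial : ℂ)⁻¹) * GG a n

open Polynomial in
lemma GG_iter (a : ℂ) (n i : ℕ) :
    derivative^[i] (GG a n) =
      C (n.factorial : ℂ) * (if i ≤ n then hh a (n - i) else 0) := by
  have key : ∀ n, C (n.factorial : ℂ) * hh a n = GG a n := by
    intro n
    have : (n.factorial : ℂ) ≠ 0 := by exact_mod_cast n.factorial_ne_zero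
    rw [hh, ← mul_assoc, ← C_mul, mul_inv_cancel₀ this]; simp
  induction i generalizing n with
  | zero => simpa using (key n).symm
  | succ i ih =>
    rw [Function.iterate_succ_apply]
    cases n with
    | zero => simp [GG]
    | succ n =>
      rw [GG_deriv, iterate_derivative_C_mul, ih, Nat.factorial_succ]
      simp only [Nat.add_le_add_iff_right, Nat.add_sub_add_right]
      push_cast
      rw [C_mul, mul_assoc]

open Polynomial in
/-- substitution `X ↦ I X`. -/
noncomputable def phi : Polynomial ℂ →+* Polynomial ℂ := compRingHom (C Complex.I * X)

open Polynomial in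
lemma phi_coeff (p : Polynomial ℂ) (n : ℕ) : (phi p).coeff n = Complex.I ^ n * p.coeff n := by
  rw [phi, coe_compRingHom_apply, comp_C_mul_X_coeff, mul_comm]

open Polynomial in
noncomputable def ee (a : ℂ) (n : ℕ) : Polynomial ℂ := C (Complex.I ^ n) * phi (hh a n)

open Polynomial in
lemma hh_rec (a : ℂ) (n : ℕ) :
    ((n : Polynomial ℂ) + 2) * hh a (n + 2) = X * hh a (n + 1) + C a * hh a n := by
  have h0 : (n.factorial : ℂ) ≠ 0 := by exact_mod_cast n.factorial_ne_zero
  have h1 : (n : ℂ) + 1 ≠ 0 := by exact_mod_cast n.succ_ne_zero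
  have h2 : (n : ℂ) + 1 + 1 ≠ 0 := by exact_mod_cast (n + 1).succ_ne_zero
  have e1 : ((n : Polynomial ℂ) + 2) = C ((n : ℂ) + 1 + 1) := by simp; ring
  have e2 : (((n + 2).factorial : ℂ))⁻¹ = ((n : ℂ) + 1 + 1)⁻¹ * ((n + 1).factorial : ℂ)⁻¹ := by
    rw [Nat.factorial_succ (n + 1)]; push_cast; rw [mul_inv]
  have e3 : (((n + 1).factorial : ℂ))⁻¹ = ((n : ℂ) + 1)⁻¹ * (n.factorial : ℂ)⁻¹ := by
    rw [Nat.factorial_succ n]; push_cast; rw [mul_inv]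
  simp only [hh, GG]
  rw [e1, ← mul_assoc, ← C_mul, e2, mul_inv_cancel_left₀ h2, mul_add]
  congr 1
  · ring
  · rw [← mul_assoc, ← C_mul, e3, ← mul_assoc (C a), ← C_mul]
    congr 2
    field_simp

open Polynomial in
lemma ee_rec (a : ℂ) (n : ℕ) :
    ((n : Polynomial ℂ) + 2) * ee a (n + 2) = - (X * ee a (n + 1) + C a * ee a n) := by
  have h := congrArg phi (hh_rec a n)
  have hX : phi X = C Complex.I * X := by simp [phi]
  have hC : ∀ c, phi (C c) = C c := by intro c; simp [phi]
  simp only [map_add, map_mul, map_natCast, map_ofNat, hX, hC] at h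
  simp only [ee]
  have hI : (C Complex.I : Polynomial ℂ) * C Complex.I = -1 := by
    rw [← C_mul, Complex.I_mul_I]; simp
  simp only [pow_succ, C_mul, map_pow] at *
  linear_combination (C Complex.I ^ n * C Complex.I * C Complex.I) * h +
    (C Complex.I ^ n * C Complex.I * X * phi (hh a (n+1)) + C Complex.I ^ n * C a * phi (hh a n)) * hI

lemma ps_ode {R : Type*} [CommRing R] [IsAddTorsionFree R] (x b : R) (f : ℕ → R) (h1 : f 1 = x * f 0)
    (h : ∀ n : ℕ, ((n : R) + 2) * f (n + 2) = x * f (n + 1) + b * f n) :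
    PowerSeries.derivative R (PowerSeries.mk f) =
      (PowerSeries.C x + PowerSeries.C b * PowerSeries.X) * PowerSeries.mk f := by
  ext n
  rw [PowerSeries.coeff_derivative, add_mul, map_add, mul_assoc]
  cases n with
  | zero => simp [h1]
  | succ n =>
    rw [PowerSeries.coeff_C_mul, PowerSeries.coeff_C_mul, PowerSeries.coeff_succ_X_mul]
    simp only [PowerSeries.coeff_mk]
    rw [← h]; push_cast; ring

lemma ps_inv {R : Type*} [CommRing R] [IsAddTorsionFree R] (x b : R) (f g : ℕ → R)
    (f0 : f 0 = 1) (g0 : g 0 = 1) (f1 : f 1 = x) (g1 : g 1 = -x)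
    (hf : ∀ n : ℕ, ((n : R) + 2) * f (n + 2) = x * f (n + 1) + b * f n)
    (hg : ∀ n : ℕ, ((n : R) + 2) * g (n + 2) = -(x * g (n + 1) + b * g n)) :
    PowerSeries.mk f * PowerSeries.mk g = 1 := by
  apply PowerSeries.derivative.ext
  · rw [Derivation.leibniz, ps_ode x b f (by rw [f0, f1, mul_one]) hf,
      ps_ode (-x) (-b) g (by rw [g0, g1, mul_one]) (fun n => by rw [hg]; ring),
      PowerSeries.derivative_one]
    simp only [map_neg, smul_eq_mul]
    ring
  · simp [f0, g0]

open Polynomial in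
lemma hh_mul_ee (a : ℂ) : PowerSeries.mk (hh a) * PowerSeries.mk (ee a) = 1 := by
  have h0 : hh a 0 = 1 := by simp [hh, GG]
  have h1 : hh a 1 = X := by simp [hh, GG]
  have e0 : ee a 0 = 1 := by simp [ee, h0]
  have e1 : ee a 1 = - X := by
    simp only [ee, h1, pow_one]
    have hX : phi X = C Complex.I * X := by simp [phi]
    rw [hX, ← mul_assoc, ← C_mul, Complex.I_mul_I]; simp
  exact ps_inv X (C a) _ _ h0 e0 h1 e1 (hh_rec a) (ee_rec a)

/-- Toeplitz matrix of a power series. -/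
noncomputable def toep {R : Type*} [CommRing R] (N : ℕ) (P : PowerSeries R) :
    Matrix (Fin N) (Fin N) R :=
  Matrix.of fun r c => if (r : ℕ) ≤ c then PowerSeries.coeff ((c : ℕ) - r) P else 0

lemma toep_mul {R : Type*} [CommRing R] (N : ℕ) (P Q : PowerSeries R) (h : P * Q = 1) :
    toep N P * toep N Q = 1 := by
  ext r c
  have e : ∀ (F : PowerSeries R) (r c : Fin N), toep N F r c =
      PowerSeries.coeff (c : ℕ) (PowerSeries.X ^ (r : ℕ) * F) := by
    intro F r c
    rw [PowerSeries.coeff_X_pow_mul']; rfl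
  have e2 : PowerSeries.coeff (c : ℕ) (PowerSeries.X ^ (r : ℕ) * P * Q) =
      if r = c then 1 else 0 := by
    rw [mul_assoc, h, mul_one, PowerSeries.coeff_X_pow]
    simp [Fin.ext_iff, eq_comm]
  rw [Matrix.one_apply, ← e2, Matrix.mul_apply, PowerSeries.coeff_mul,
    Finset.Nat.sum_antidiagonal_eq_sum_range_succ
      (fun i j => PowerSeries.coeff i (PowerSeries.X ^ (r : ℕ) * P) * PowerSeries.coeff j Q)]
  have : ∀ k : Fin N, toep N P r k * toep N Q k c =
      (fun k : ℕ => if k ≤ (c : ℕ) then PowerSeries.coeff k (PowerSeries.X ^ (r : ℕ) * P) *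
        PowerSeries.coeff ((c : ℕ) - k) Q else 0) k := by
    intro k
    rw [e P]
    simp only [toep, Matrix.of_apply, mul_ite, mul_zero]
  rw [Finset.sum_congr rfl (fun k _ => this k), Fin.sum_univ_eq_sum_range
    (fun k : ℕ => if k ≤ (c : ℕ) then PowerSeries.coeff k (PowerSeries.X ^ (r : ℕ) * P) *
        PowerSeries.coeff ((c : ℕ) - k) Q else 0), ← Finset.sum_filter]
  apply Finset.sum_congr _ (fun _ _ => rfl)
  ext k
  have := c.2
  simp only [Finset.mem_filter, Finset.mem_range]
  omega

lemma toep_det {R : Type*} [CommRing R] (N : ℕ) (P : PowerSeries R)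
    (h : PowerSeries.coeff 0 P = 1) : (toep N P).det = 1 := by
  rw [Matrix.det_of_isUpperTriangular]
  · simp [toep] at *
    simp [h]
  · intro i j hij
    have : ¬ ((i : ℕ) ≤ j) := by
      have : j < i := hij
      have : (j : ℕ) < i := this
      omega
    simp only [toep, Matrix.of_apply, if_neg this]

lemma jacobi {R : Type*} [CommRing R] {k m N : ℕ} (σ τ : Fin k ⊕ Fin m ≃ Fin N)
    (P Q : PowerSeries R) (hPQ : P * Q = 1) (hP : PowerSeries.coeff 0 P = 1) :
    (Matrix.of fun i j : Fin k => toep N P (σ (Sum.inl i)) (τ (Sum.inl j))).det =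
      ((Equiv.Perm.sign (σ.symm.trans τ) : ℤ) : R) *
      (Matrix.of fun i j : Fin m => toep N Q (τ (Sum.inr i)) (σ (Sum.inr j))).det := by
  set A := (toep N P).submatrix σ τ with hA
  set B := (toep N Q).submatrix τ σ with hB
  have hAB : A * B = 1 := by
    rw [hA, hB, Matrix.submatrix_mul_equiv, toep_mul N P Q hPQ]
    simp
  have hdA : A.det = ((Equiv.Perm.sign (σ.symm.trans τ) : ℤ) : R) := by
    have : A = ((toep N P).submatrix id (σ.symm.trans τ)).submatrix σ σ := by
      ext i j; simp [hA]
    rw [this, Matrix.det_submatrix_equiv_self, Matrix.det_permute', toep_det N P hP, mul_one]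
  have hA' := Matrix.fromBlocks_toBlocks A
  have hB' := Matrix.fromBlocks_toBlocks B
  rw [← hA', ← hB', Matrix.fromBlocks_multiply, ← Matrix.fromBlocks_one,
    Matrix.fromBlocks_inj] at hAB
  obtain ⟨-, h12, -, h22⟩ := hAB
  have hm : A * Matrix.fromBlocks 1 B.toBlocks₁₂ 0 B.toBlocks₂₂ =
      Matrix.fromBlocks A.toBlocks₁₁ 0 A.toBlocks₂₁ 1 := by
    conv_lhs => rw [← hA']
    rw [Matrix.fromBlocks_multiply, h12, h22]
    simp
  have hd := congrArg Matrix.det hm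
  rw [Matrix.det_mul, Matrix.det_fromBlocks_zero₂₁, Matrix.det_fromBlocks_zero₁₂, hdA] at hd
  simp only [Matrix.det_one, one_mul, mul_one] at hd
  exact hd.symm

/-- The Jacobi-Trudi matrix. -/
noncomputable def JT {R : Type*} [CommRing R] (l : List ℕ) (h : ℕ → R) :
    Matrix (Fin l.length) (Fin l.length) R :=
  Matrix.of fun i j => if (i : ℕ) ≤ degVec l j then h (degVec l j - i) else 0

lemma conj_key (l : List ℕ) (hl : l.Pairwise (· ≥ ·)) (i : Fin l.length) (a : ℕ) :
    (i : ℕ) < conjPart l (a + 1) ↔ a < l.get i := by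
  induction l with
  | nil => exact i.elim0
  | cons x t ih =>
    rw [List.pairwise_cons] at hl
    by_cases hx : a + 1 ≤ x
    · have e : conjPart (x :: t) (a + 1) = conjPart t (a + 1) + 1 := by
        rw [conjPart, List.filter_cons_of_pos (by simpa using hx)]; rfl
      rw [e]
      refine Fin.cases ?_ (fun i => ?_) i
      · simp; omega
      · have := ih hl.2 i
        simpa using this
    · have e : conjPart (x :: t) (a + 1) = 0 := by
        simp only [conjPart, List.length_eq_zero_iff, List.filter_eq_nil_iff, decide_eq_true_eq]
        intro b hb
        rcases List.mem_cons.1 hb with rfl | hb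
        · exact hx
        · have := hl.1 b hb; omega
      rw [e]
      have : (x :: t).get i ≤ x := by
        refine Fin.cases ?_ (fun i => ?_) i
        · simp
        · exact hl.1 _ (List.get_mem t i)
      omega

lemma conjugate_length (l : List ℕ) : (conjugate l).length = l.headI := by
  simp [conjugate]

lemma conjugate_get (l : List ℕ) (a : Fin (conjugate l).length) :
    (conjugate l).get a = conjPart l (a + 1) := by
  rw [List.get_eq_getElem]
  simp only [conjugate, List.getElem_map, List.getElem_range]

lemma conjPart_anti (l : List ℕ) {a b : ℕ} (h : a ≤ b) : conjPart l b ≤ conjPart l a := by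
  unfold conjPart
  apply List.Sublist.length_le
  apply List.monotone_filter_right
  intro x hx
  simp at *
  omega

lemma conjPart_le (l : List ℕ) (a : ℕ) : conjPart l a ≤ l.length :=
  List.length_filter_le _ _

lemma get_le_head (l : List ℕ) (hl : l.Pairwise (· ≥ ·)) (i : Fin l.length) :
    l.get i ≤ l.headI := by
  cases l with
  | nil => exact i.elim0
  | cons x t =>
    rw [List.pairwise_cons] at hl
    refine Fin.cases ?_ (fun i => ?_) i
    · simp
    · exact hl.1 _ (List.get_mem t i)

lemma conjugate_pairwise (l : List ℕ) : (conjugate l).Pairwise (· ≥ ·) := by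
  unfold conjugate
  rw [List.pairwise_map]
  refine List.pairwise_lt_range.imp ?_
  intro a b h
  exact conjPart_anti l (by omega)

lemma degVec_strictAnti (l : List ℕ) (hl : l.Pairwise (· ≥ ·)) {i j : Fin l.length} (h : i < j) :
    degVec l j < degVec l i := by
  have h1 : l.get j ≤ l.get i := List.pairwise_iff_get.1 hl i j h
  have h2 : (i : ℕ) < j := h
  have := j.2
  unfold degVec
  omega

lemma degVec_inj (l : List ℕ) (hl : l.Pairwise (· ≥ ·)) : Function.Injective (degVec l) := by
  intro i j h
  rcases lt_trichotomy i j with h1 | h1 | h1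
  · have := degVec_strictAnti l hl h1; omega
  · exact h1
  · have := degVec_strictAnti l hl h1; omega

lemma degVec_lt (l : List ℕ) (hl : l.Pairwise (· ≥ ·)) (i : Fin l.length) :
    degVec l i < l.length + (conjugate l).length := by
  have := get_le_head l hl i
  have := i.2
  rw [conjugate_length]
  unfold degVec
  omega

lemma degVec_conj_lt (l : List ℕ) (i : Fin (conjugate l).length) :
    degVec (conjugate l) i < l.length + (conjugate l).length := by
  have h := conjugate_get l i
  have := conjPart_le l (i + 1)
  have := i.2
  unfold degVec
  omega

lemma exists_equivs (l : List ℕ) (hl : l.Pairwise (· ≥ ·)) :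
    ∃ σ τ : Fin l.length ⊕ Fin (conjugate l).length ≃ Fin (l.length + (conjugate l).length),
      (∀ i, (σ (Sum.inl i) : ℕ) = i) ∧
      (∀ i, (σ (Sum.inr i) : ℕ) + i + 1 = l.length + (conjugate l).length) ∧
      (∀ i, (τ (Sum.inl i) : ℕ) = degVec l i) ∧
      (∀ i, (τ (Sum.inr i) : ℕ) + degVec (conjugate l) i + 1 =
        l.length + (conjugate l).length) := by
  have mk : ∀ (u : Fin l.length → ℕ) (v : Fin (conjugate l).length → ℕ),
      (∀ i, u i < l.length + (conjugate l).length) →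
      (∀ i, v i < l.length + (conjugate l).length) →
      Function.Injective u → Function.Injective v →
      (∀ i j, u i + v j + 1 ≠ l.length + (conjugate l).length) →
      ∃ σ : Fin l.length ⊕ Fin (conjugate l).length ≃ Fin (l.length + (conjugate l).length),
      (∀ i, (σ (Sum.inl i) : ℕ) = u i) ∧
      (∀ i, (σ (Sum.inr i) : ℕ) + v i + 1 = l.length + (conjugate l).length) := by
    intro u v hu hv iu iv huv
    let f : Fin l.length ⊕ Fin (conjugate l).length → Fin (l.length + (conjugate l).length) :=
      Sum.elim (fun i => ⟨u i, hu i⟩)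
        (fun i => ⟨l.length + (conjugate l).length - 1 - v i, by have := hv i; omega⟩)
    have hf : Function.Injective f := by
      rintro (i | i) (j | j) h
      · simp only [f, Sum.elim_inl, Fin.mk.injEq] at h
        rw [iu h]
      · simp only [f, Sum.elim_inl, Sum.elim_inr, Fin.mk.injEq] at h
        have := huv i j; have := hv j; omega
      · simp only [f, Sum.elim_inl, Sum.elim_inr, Fin.mk.injEq] at h
        have := huv j i; have := hv i; omega
      · simp only [f, Sum.elim_inr, Fin.mk.injEq] at h
        have := hv i; have := hv j
        rw [iv (show v i = v j by omega)]
    have hb : Function.Bijective f :=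
      (Fintype.bijective_iff_injective_and_card f).2 ⟨hf, by simp⟩
    refine ⟨Equiv.ofBijective f hb, fun i => ?_, fun i => ?_⟩
    · simp [f]
    · have := hv i
      simp [f]; omega
  obtain ⟨σ, h1, h2⟩ := mk (fun i => i) (fun i => i) (fun i => by have := i.2; omega)
    (fun i => by have := i.2; omega) Fin.val_injective Fin.val_injective
    (fun i j => by have := i.2; have := j.2; omega)
  obtain ⟨τ, h3, h4⟩ := mk (degVec l) (degVec (conjugate l)) (degVec_lt l hl) (degVec_conj_lt l)
    (degVec_inj l hl) (degVec_inj _ (conjugate_pairwise l)) (fun i j => by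
      have h1 := conj_key l hl i j
      have h2 := conjugate_get l j
      have := i.2
      have := j.2
      unfold degVec
      omega)
  exact ⟨σ, τ, h1, h2, h3, h4⟩

lemma dual_JT (l : List ℕ) (hl : l.Pairwise (· ≥ ·)) :
    ∃ s : ℤ, s * s = 1 ∧ ∀ h e : ℕ → Polynomial ℂ, PowerSeries.mk h * PowerSeries.mk e = 1 →
      h 0 = 1 → (JT l h).det = (s : Polynomial ℂ) * (JT (conjugate l) e).det := by
  obtain ⟨σ, τ, h1, h2, h3, h4⟩ := exists_equivs l hl
  refine ⟨(Equiv.Perm.sign (σ.symm.trans τ) : ℤ), ?_, ?_⟩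
  · rw [← Units.val_mul, Int.units_mul_self]; rfl
  · intro h e he h0
    have := jacobi σ τ _ _ he (by simpa using h0)
    convert this using 2
    · congr 1
      ext1 i j
      simp only [JT, toep, Matrix.of_apply, h1, h3, PowerSeries.coeff_mk]
    · rw [← Matrix.det_transpose]
      congr 1
      ext1 i j
      simp only [JT, toep, Matrix.of_apply, Matrix.transpose_apply, PowerSeries.coeff_mk]
      have a1 := h2 j
      have a2 := h4 i
      by_cases hc : (j : ℕ) ≤ degVec (conjugate l) i
      · rw [if_pos hc, if_pos (by omega)]
        congr 1
        omega
      · rw [if_neg hc, if_neg (by omega)]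

lemma sum_degVec (l : List ℕ) : ∑ i, degVec l i = l.sum + ∑ i : Fin l.length, (i : ℕ) := by
  unfold degVec
  rw [Finset.sum_add_distrib]
  congr 1
  · simpa using Fin.sum_univ_getElem l
  · rw [← Equiv.sum_comp Fin.revPerm]
    apply Finset.sum_congr rfl
    intro i _
    simp [Fin.val_rev]
    omega

open Polynomial in
lemma JT_ee (l : List ℕ) (a : ℂ) :
    (JT l (ee a)).det = C (Complex.I ^ l.sum) * phi (JT l (hh a)).det := by
  have e : JT l (ee a) = Matrix.of fun i j : Fin l.length =>
      (C (Complex.I⁻¹ ^ (i : ℕ))) * (Matrix.of fun i j : Fin l.length => C (Complex.I ^ (degVec l j)) *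
        (phi.mapMatrix (JT l (hh a))) i j) i j := by
    ext1 i j
    simp only [JT, Matrix.of_apply, RingHom.mapMatrix_apply, Matrix.map_apply]
    split_ifs with h
    · rw [ee, ← mul_assoc, ← C_mul, pow_sub₀ _ Complex.I_ne_zero h, mul_comm (Complex.I ^ _),
        inv_pow]
    · simp
  rw [e, Matrix.det_mul_column, Matrix.det_mul_row, ← RingHom.map_det, ← mul_assoc]
  congr 1
  rw [← map_prod, ← map_prod, ← C_mul, Finset.prod_pow_eq_pow_sum, Finset.prod_pow_eq_pow_sum,
    sum_degVec, pow_add, inv_pow]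
  congr 1
  rw [mul_comm, mul_assoc, mul_inv_cancel₀ (pow_ne_zero _ Complex.I_ne_zero), mul_one]

open Polynomial in
lemma wr_JT (l : List ℕ) (a : ℂ) :
    (Matrix.of fun i j : Fin l.length => derivative^[(i : ℕ)] (GG a (degVec l j))).det =
      C (∏ j, ((degVec l j).factorial : ℂ)) * (JT l (hh a)).det := by
  rw [map_prod, ← Matrix.det_mul_row]
  congr 1
  ext1 i j
  simp only [Matrix.of_apply, GG_iter, JT]

lemma vanderQ_eq (l : List ℕ) :
    vanderQ l = (Matrix.vandermonde fun i => (degVec l i : ℚ)).det := by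
  rw [Matrix.det_vandermonde, vanderQ]
  apply Finset.prod_congr rfl
  intro i _
  rw [← Finset.prod_filter]
  apply Finset.prod_congr _ (fun _ _ => rfl)
  ext j
  simp

lemma vanderQ_ne (l : List ℕ) (hl : l.Pairwise (· ≥ ·)) : vanderQ l ≠ 0 := by
  rw [vanderQ_eq, Matrix.det_vandermonde_ne_zero_iff]
  intro i j h
  exact degVec_inj l hl (Nat.cast_injective h)

open Polynomial in
lemma wr_monomial (l : List ℕ) :
    (Matrix.of fun i j : Fin l.length => derivative^[(i : ℕ)] (GG 0 (degVec l j))).det =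
      C (vanderQ l : ℂ) * X ^ l.sum := by
  have hv : (vanderQ l : ℂ) =
      (Matrix.of fun i j : Fin l.length => ((degVec l j).descFactorial i : ℂ)).det := by
    rw [vanderQ_eq, ← Matrix.det_transpose (Matrix.of _),
      Matrix.det_eval_matrixOfPolynomials_eq_det_vandermonde _ (fun i => descPochhammer ℚ i)
      (fun i => descPochhammer_natDegree ℚ i) (fun i => monic_descPochhammer ℚ i)]
    rw [← eq_ratCast (Rat.castHom ℂ), RingHom.map_det]
    congr 1
    ext1 i j
    simp [descPochhammer_eval_eq_descFactorial]
  have hX : (X : Polynomial ℂ) ^ (∑ i : Fin l.length, (i : ℕ)) ≠ 0 := pow_ne_zero _ X_ne_zero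
  apply mul_left_cancel₀ hX
  rw [← Finset.prod_pow_eq_pow_sum, ← Matrix.det_mul_column]
  have : (Matrix.of fun i j : Fin l.length => X ^ (i : ℕ) *
      (Matrix.of fun i j : Fin l.length => derivative^[(i : ℕ)] (GG 0 (degVec l j))) i j) =
      Matrix.of fun i j => X ^ (degVec l j) * ((C : ℂ →+* _).mapMatrix
        (Matrix.of fun i j : Fin l.length => ((degVec l j).descFactorial i : ℂ))) i j := by
    ext1 i j
    simp only [Matrix.of_apply, GG_zero, iterate_derivative_X_pow_eq_C_mul,
      RingHom.mapMatrix_apply, Matrix.map_apply]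
    by_cases h : (i : ℕ) ≤ degVec l j
    · rw [mul_left_comm, ← pow_add, mul_comm, Nat.add_sub_cancel' h]
    · rw [Nat.descFactorial_of_lt (by omega)]; simp
  rw [this, Matrix.det_mul_row, ← RingHom.map_det, ← hv, Finset.prod_pow_eq_pow_sum,
    Finset.prod_pow_eq_pow_sum, sum_degVec, pow_add]
  ring

open Polynomial in
lemma HeW_map (l : List ℕ) (hl : l.Pairwise (· ≥ ·)) :
    C (vanderQ l : ℂ) * (HeW l).map (Rat.castHom ℂ) =
      C (∏ j, ((degVec l j).factorial : ℂ)) * (JT l (hh (-1))).det := by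
  rw [← wr_JT, HeW, Polynomial.map_mul, map_C, ← mul_assoc, ← C_mul]
  have : (vanderQ l : ℂ) * (Rat.castHom ℂ) (vanderQ l)⁻¹ = 1 := by
    rw [← eq_ratCast (Rat.castHom ℂ), ← map_mul, mul_inv_cancel₀ (vanderQ_ne l hl), map_one]
  rw [this, C_1, one_mul, ← coe_mapRingHom, RingHom.map_det]
  congr 1
  ext1 i j
  simp only [RingHom.mapMatrix_apply, Matrix.map_apply, Matrix.of_apply, coe_mapRingHom]
  rw [← iterate_derivative_map, Polynomial.map_map, GG_hermite]
  congr 2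

/-- Conjugation symmetry of the coefficients of Wronskian Hermite polynomials:
`coeff_{|λ|−2j}(He_λ) = (−1)^j · coeff_{|λ|−2j}(He_{λ'})`. -/
theorem wronskianHermite_coeff_conjugate (l : List ℕ) (hl : IsPartition l)
    (j : ℕ) (hj : 2 * j ≤ l.sum) :
    (HeW l).coeff (l.sum - 2 * j) =
      (-1 : ℚ) ^ j * (HeW (conjugate l)).coeff (l.sum - 2 * j) := by
  have hp := hl.1
  have hp' := conjugate_pairwise l
  obtain ⟨s, hs, H⟩ := dual_JT l hp
  have hh0 : ∀ a, hh a 0 = 1 := by intro a; simp [hh, GG]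
  have Hm : ∀ a, (JT l (hh a)).det = (s : Polynomial ℂ) *
      (Polynomial.C (Complex.I ^ (conjugate l).sum) * phi (JT (conjugate l) (hh a)).det) := by
    intro a
    rw [← JT_ee]
    exact H _ _ (hh_mul_ee a) (hh0 a)
  have M1 := (wr_monomial l).symm.trans (wr_JT l 0)
  have M2 := (wr_monomial (conjugate l)).symm.trans (wr_JT (conjugate l) 0)
  have W1 := HeW_map l hp
  have W2 := HeW_map (conjugate l) hp'
  have H0 := Hm 0
  have H1 := Hm (-1)
  set F : ℂ := ∏ j, ((degVec l j).factorial : ℂ) with hF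
  set F' : ℂ := ∏ j, ((degVec (conjugate l) j).factorial : ℂ) with hF'
  have F0 : F ≠ 0 := Finset.prod_ne_zero_iff.2 fun i _ => by
    exact_mod_cast Nat.factorial_ne_zero _
  have F0' : F' ≠ 0 := Finset.prod_ne_zero_iff.2 fun i _ => by
    exact_mod_cast Nat.factorial_ne_zero _
  have V0 : (vanderQ l : ℂ) ≠ 0 := by exact_mod_cast vanderQ_ne l hp
  have V0' : (vanderQ (conjugate l) : ℂ) ≠ 0 := by exact_mod_cast vanderQ_ne _ hp'
  set V : ℂ := (vanderQ l : ℂ) with hV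
  set V' : ℂ := (vanderQ (conjugate l) : ℂ) with hV'
  have hsC : (s : ℂ) * s = 1 := by exact_mod_cast hs
  have sC : (s : Polynomial ℂ) = Polynomial.C (s : ℂ) := by simp
  rw [sC] at H0 H1
  -- coefficientwise forms
  have M1c := fun k => congrArg (fun p => Polynomial.coeff p k) M1
  have M2c := fun k => congrArg (fun p => Polynomial.coeff p k) M2
  have H0c := fun k => congrArg (fun p => Polynomial.coeff p k) H0
  have H1c := fun k => congrArg (fun p => Polynomial.coeff p k) H1
  have W1c := fun k => congrArg (fun p => Polynomial.coeff p k) W1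
  have W2c := fun k => congrArg (fun p => Polynomial.coeff p k) W2
  simp only [Polynomial.coeff_C_mul, phi_coeff, Polynomial.coeff_map, Polynomial.coeff_X_pow]
    at M1c M2c H0c H1c W1c W2c
  have hsum : l.sum = (conjugate l).sum := by
    by_contra hne
    have a1 := M1c l.sum
    have a2 := M2c l.sum
    rw [if_pos rfl] at a1
    rw [if_neg hne, mul_zero] at a2
    have a3 : (JT (conjugate l) (hh 0)).det.coeff l.sum = 0 := by
      rcases mul_eq_zero.1 a2.symm with h | h
      · exact absurd h F0'
      · exact h
    rw [H0c, a3] at a1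
    simp at a1
    exact V0 a1
  rw [← hsum] at M2c H0c H1c
  set n := l.sum with hn
  have hI2 : Complex.I ^ n * Complex.I ^ n = (-1) ^ n := by
    rw [← mul_pow, Complex.I_mul_I]
  have hr : V * F' = F * s * (-1) ^ n * V' := by
    have a1 := M1c n
    have a2 := M2c n
    rw [if_pos rfl, mul_one] at a1 a2
    rw [a1, a2, H0c, ← hI2]
    ring
  set k := n - 2 * j with hk
  have hI3 : Complex.I ^ n * Complex.I ^ k = (-1) ^ n * (-1) ^ j := by
    have e : n = k + 2 * j := by omega
    rw [e]
    simp only [pow_add, pow_mul, Complex.I_sq]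
    have : Complex.I ^ k * Complex.I ^ k = (-1) ^ k := by rw [← mul_pow, Complex.I_mul_I]
    have h1 : ((-1 : ℂ) ^ 2) ^ j = 1 := by simp
    rw [h1]
    linear_combination (-1) ^ j * this
  have a := W1c k
  have b := W2c k
  rw [H1c] at a
  simp only [eq_ratCast] at a b
  have hn1 : ((-1 : ℂ) ^ n) * (-1) ^ n = 1 := by rw [← mul_pow]; simp
  have goalC : (((HeW l).coeff k : ℚ) : ℂ) = (-1) ^ j * ((HeW (conjugate l)).coeff k : ℚ) := by
    apply mul_left_cancel₀ (mul_ne_zero V0 F0')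
    set D := (JT (conjugate l) (hh (-1))).det.coeff k
    calc V * F' * ((HeW l).coeff k : ℂ) = F' * (V * ((HeW l).coeff k : ℂ)) := by ring
      _ = F * s * (Complex.I ^ n * Complex.I ^ k) * (F' * D) := by rw [a]; ring
      _ = (F * s * (-1) ^ n * V') * ((-1) ^ j * ((HeW (conjugate l)).coeff k : ℂ)) := by
          rw [hI3, ← b]; ring
      _ = _ := by rw [← hr]
  exact_mod_cast goalC
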